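/- arXiv:math/0411634 — 4 statements merged into one kernel-verified Lean document; each statement's English description precedes it below -/
import Mathlib

section
/- Let p ≥ 1 and let A be a symmetric invertible real p × p matrix. In 2p × 2p block form set J = diag(I_p, −I_p) and T = [[I_p, A], [I_p, −A⁻¹]]. Then T is invertible, with inverse T⁻¹ = [[(A² + I)⁻¹, A²(A² + I)⁻¹], [A(A² + I)⁻¹, −A(A² + I)⁻¹]], and det(I_{2p} − J T⁻¹ J T) = 2^{2p} · det(A²) · det(A² + I_p)⁻¹. -/
open Matrix

/-!
Since `J² = 1`, the matrix `J T⁻¹ J` is the inverse of `J T J`, so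
`1 - J T⁻¹ J T = (J T J)⁻¹ (J T J - T)`. Conjugation by `J` only changes the sign of the
off-diagonal blocks of `T`, hence `J T J - T` is block antidiagonal and the determinant is
explicit in terms of `det T`. For `T = [[1, A], [1, -A⁻¹]]`, the Schur complement of the upper
left block is `-A⁻¹ - A = -A⁻¹ (A² + 1)`, which gives `det T`.
-/

open scoped Ring

section Ring

variable {m n R : Type*} [Fintype m] [Fintype n] [DecidableEq m] [DecidableEq n] [Ring R]

theorem fromBlocks_one_neg_one_mul_self :
    (fromBlocks 1 0 0 (-1) * fromBlocks 1 0 0 (-1) : Matrix (m ⊕ n) (m ⊕ n) R) = 1 := by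
  simp [fromBlocks_multiply]

theorem fromBlocks_one_neg_one_conj (P : Matrix m m R) (Q : Matrix m n R) (S : Matrix n m R)
    (U : Matrix n n R) :
    fromBlocks 1 0 0 (-1) * fromBlocks P Q S U * fromBlocks 1 0 0 (-1) =
      fromBlocks P (-Q) (-S) U := by
  simp [fromBlocks_multiply]

theorem fromBlocks_one_neg_one_conj_sub (P : Matrix m m R) (Q : Matrix m n R) (S : Matrix n m R)
    (U : Matrix n n R) :
    fromBlocks 1 0 0 (-1) * fromBlocks P Q S U * fromBlocks 1 0 0 (-1) - fromBlocks P Q S U =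
      (-2 : R) • fromBlocks 0 Q S 0 := by
  rw [fromBlocks_one_neg_one_conj, sub_eq_add_neg, fromBlocks_neg, fromBlocks_add,
    fromBlocks_smul]
  simp [two_smul]

end Ring

theorem posDef_sq_add_one_of_isHermitian {n R : Type*} [Fintype n] [DecidableEq n] [Ring R]
    [PartialOrder R] [StarRing R] [StarOrderedRing R] [NoZeroDivisors R]
    {A : Matrix n n R} (hA : A.IsHermitian) : (A ^ 2 + 1).PosDef := by
  have hsq : (A ^ 2).PosSemidef := by
    simpa only [hA.eq, ← sq] using posSemidef_conjTranspose_mul_self A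
  exact PosDef.posSemidef_add hsq PosDef.one

section CommRing

variable {n R : Type*} [Fintype n] [DecidableEq n] [CommRing R]

theorem det_fromBlocks_zero_one_one_zero :
    (fromBlocks 0 1 1 0 : Matrix (n ⊕ n) (n ⊕ n) R).det = (-1) ^ Fintype.card n := by
  have hshear : (fromBlocks 1 1 0 1 * fromBlocks 0 1 1 0 : Matrix (n ⊕ n) (n ⊕ n) R) =
      fromBlocks 1 1 1 0 := by
    simp [fromBlocks_multiply]
  simpa [det_fromBlocks_one₁₁, det_neg] using congrArg det hshear

theorem det_fromBlocks_zero₁₁_zero₂₂ (B C : Matrix n n R) :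
    (fromBlocks 0 B C 0).det = (-1) ^ Fintype.card n * (B.det * C.det) := by
  have hswap : fromBlocks 0 B C 0 = fromBlocks B 0 0 C * fromBlocks 0 1 1 0 := by
    simp [fromBlocks_multiply]
  rw [hswap, det_mul, det_fromBlocks_zero₂₁, det_fromBlocks_zero_one_one_zero, mul_comm]

theorem det_one_sub_conj_inv_mul {J T : Matrix (n ⊕ n) (n ⊕ n) R} {P Q S U : Matrix n n R}
    (hJ : J = fromBlocks 1 0 0 (-1)) (hT : T = fromBlocks P Q S U) (hdet : IsUnit T.det) :
    (1 - J * T⁻¹ * J * T).det * T.det =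
      (-1) ^ Fintype.card n * 2 ^ (2 * Fintype.card n) * (Q.det * S.det) := by
  have hJJ : J * J = 1 := by rw [hJ, fromBlocks_one_neg_one_mul_self]
  have hinv : J * T * J * (J * T⁻¹ * J) = 1 := by
    calc J * T * J * (J * T⁻¹ * J) = J * T * (J * J) * T⁻¹ * J := by noncomm_ring
      _ = J * (T * T⁻¹) * J := by rw [hJJ]; noncomm_ring
      _ = 1 := by rw [mul_nonsing_inv _ hdet, mul_one, hJJ]
  have hfactor : J * T * J * (1 - J * T⁻¹ * J * T) = (-2 : R) • fromBlocks 0 Q S 0 := by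
    rw [mul_sub, mul_one, ← mul_assoc, hinv, one_mul, hJ, hT, fromBlocks_one_neg_one_conj_sub]
  have hdetconj : (J * T * J).det = T.det := by
    rw [det_mul_right_comm, hJJ, one_mul]
  calc (1 - J * T⁻¹ * J * T).det * T.det
      = (J * T * J * (1 - J * T⁻¹ * J * T)).det := by rw [det_mul, hdetconj, mul_comm]
    _ = (-1) ^ Fintype.card n * 2 ^ (2 * Fintype.card n) * (Q.det * S.det) := by
      rw [hfactor, det_smul, det_fromBlocks_zero₁₁_zero₂₂, Fintype.card_sum, ← two_mul,
        (even_two_mul _).neg_pow]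
      ring

variable {A : Matrix n n R}

theorem det_mul_det_fromBlocks_one_one_neg_inv (hA : IsUnit A.det) :
    A.det * (fromBlocks 1 A 1 (-A⁻¹)).det = (-1) ^ Fintype.card n * (A ^ 2 + 1).det := by
  have hschur : A * (-A⁻¹ - 1 * A) = -(A ^ 2 + 1) := by
    rw [mul_sub, mul_neg, mul_nonsing_inv _ hA]
    noncomm_ring
  rw [det_fromBlocks_one₁₁, ← det_mul, hschur, det_neg]

theorem fromBlocks_one_one_neg_inv_mul_eq_one (hA : IsUnit A.det)
    (hA2 : IsUnit (A ^ 2 + 1).det) :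
    fromBlocks 1 A 1 (-A⁻¹) *
      fromBlocks (A ^ 2 + 1)⁻¹ (A ^ 2 * (A ^ 2 + 1)⁻¹)
        (A * (A ^ 2 + 1)⁻¹) (-(A * (A ^ 2 + 1)⁻¹)) = 1 := by
  have hright : A ^ 2 * (A ^ 2 + 1)⁻¹ + (A ^ 2 + 1)⁻¹ = 1 := by
    rw [← add_one_mul, mul_nonsing_inv _ hA2]
  have hcancel : A⁻¹ * (A * (A ^ 2 + 1)⁻¹) = (A ^ 2 + 1)⁻¹ :=
    nonsing_inv_mul_cancel_left _ _ hA
  have hsq : A * (A * (A ^ 2 + 1)⁻¹) = A ^ 2 * (A ^ 2 + 1)⁻¹ := by rw [sq, mul_assoc]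
  simp [fromBlocks_multiply, hcancel, hsq, hright, add_comm (A ^ 2 + 1)⁻¹]

theorem block_scattering_det_general (hA : IsUnit A.det) (hA2 : IsUnit (A ^ 2 + 1).det)
    {J T : Matrix (n ⊕ n) (n ⊕ n) R} (hJ : J = fromBlocks 1 0 0 (-1))
    (hT : T = fromBlocks 1 A 1 (-A⁻¹)) :
    IsUnit T.det ∧
    T⁻¹ = fromBlocks (A ^ 2 + 1)⁻¹ (A ^ 2 * (A ^ 2 + 1)⁻¹)
      (A * (A ^ 2 + 1)⁻¹) (-(A * (A ^ 2 + 1)⁻¹)) ∧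
    (1 - J * T⁻¹ * J * T).det =
      2 ^ (2 * Fintype.card n) * (A ^ 2).det * (A ^ 2 + 1).det⁻¹ʳ := by
  have hright := fromBlocks_one_one_neg_inv_mul_eq_one hA hA2
  rw [← hT] at hright
  have hTdet : IsUnit T.det := isUnit_det_of_right_inverse hright
  refine ⟨hTdet, inv_eq_right_inv hright, ?_⟩
  have hdet : (1 - J * T⁻¹ * J * T).det * T.det =
      (-1) ^ Fintype.card n * 2 ^ (2 * Fintype.card n) * A.det := by
    simpa using det_one_sub_conj_inv_mul hJ hT hTdet
  have hAT : A.det * T.det = (-1) ^ Fintype.card n * (A ^ 2 + 1).det := by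
    rw [hT, det_mul_det_fromBlocks_one_one_neg_inv hA]
  have hsign : IsUnit ((-1 : R) ^ Fintype.card n) := isUnit_one.neg.pow _
  rw [Ring.eq_mul_inverse_iff_mul_eq _ _ _ hA2, ← hsign.mul_right_inj, mul_left_comm, ← hAT]
  calc (1 - J * T⁻¹ * J * T).det * (A.det * T.det)
      = A.det * ((1 - J * T⁻¹ * J * T).det * T.det) := by ring
    _ = (-1) ^ Fintype.card n * (2 ^ (2 * Fintype.card n) * (A ^ 2).det) := by
      rw [hdet, det_pow]
      ring

end CommRing

/-- The explicit determinant computation in the proof of Lemma 7.10 of the paper.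
Let `p ≥ 1` and let `A` be a symmetric invertible real `p × p` matrix. With
`J = diag(I, −I)` and `T = [[I, A], [I, −A⁻¹]]` in `2p × 2p` block form, `T` is
invertible, its inverse is `[[(A²+I)⁻¹, A²(A²+I)⁻¹], [A(A²+I)⁻¹, −A(A²+I)⁻¹]]`,
and `det(I − J T⁻¹ J T) = 2^{2p} det(A²) det(A²+I)⁻¹`. -/
theorem block_scattering_det (p : ℕ) (hp : 1 ≤ p)
    (A : Matrix (Fin p) (Fin p) ℝ) (hA : A.IsSymm) (hinv : IsUnit A.det)
    (J T : Matrix (Fin p ⊕ Fin p) (Fin p ⊕ Fin p) ℝ)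
    (hJ : J = Matrix.fromBlocks 1 0 0 (-1))
    (hT : T = Matrix.fromBlocks 1 A 1 (-A⁻¹)) :
    IsUnit T.det ∧
    T⁻¹ = Matrix.fromBlocks ((A ^ 2 + 1)⁻¹) (A ^ 2 * (A ^ 2 + 1)⁻¹)
      (A * (A ^ 2 + 1)⁻¹) (-(A * (A ^ 2 + 1)⁻¹)) ∧
    (1 - J * T⁻¹ * J * T).det = 2 ^ (2 * p) * (A ^ 2).det * ((A ^ 2 + 1).det)⁻¹ := by
  have hpos := (posDef_sq_add_one_of_isHermitian (isHermitian_iff_isSymm.mpr hA)).det_pos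
  simpa only [Fintype.card_fin, Ring.inverse_eq_inv'] using
    block_scattering_det_general hinv hpos.ne'.isUnit hJ hT
end

section
/- Let b₀ ∈ ℝ, ρ > 0, C > 0, and let f : [1, ∞) → ℝ be a locally integrable function with |f(t) − b₀| ≤ C t^{−ρ} for all t ≥ 1. Then lim_{λ → 0⁺} ( ∫₁^∞ t⁻¹ e^{−λt} f(t) dt + b₀ log λ ) = ∫₁^∞ t⁻¹ (f(t) − b₀) dt − b₀ γ, where γ is the Euler–Mascheroni constant. -/
open MeasureTheory Real Filter

open Asymptotics Set Topology

/-!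
Write `f = b₀ + (f - b₀)`. Since `t⁻¹ (f - b₀)` is integrable on `(1, ∞)`, its Laplace transform
tends to its integral as `λ → 0⁺`. The constant `b₀` contributes `b₀ E₁(λ)`, where `E₁` is the
exponential integral, and integration by parts gives
`E₁(x) = ∫ₓ^∞ log t e⁻ᵗ dt - log x e⁻ˣ = Γ′(1) - log x + o(1)`, with `Γ′(1) = -γ`.
-/

theorem hasDerivAt_Gamma_integral {s : ℝ} (hs : 0 < s) :
    HasDerivAt Gamma (∫ t in Ioi 0, t ^ (s - 1) * (log t * exp (-t))) s := by
  have complex_integral :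
      ∫ t in Ioi (0 : ℝ), (t : ℂ) ^ ((s : ℂ) - 1) * (log t * exp (-t))
        = ((∫ t in Ioi 0, t ^ (s - 1) * (log t * exp (-t)) : ℝ) : ℂ) := by
    rw [← integral_complex_ofReal]
    refine setIntegral_congr_fun measurableSet_Ioi fun t ht ↦ ?_
    simp [Complex.ofReal_cpow (mem_Ioi.1 ht).le]
  have eventually_eq : Complex.Gamma =ᶠ[𝓝 (s : ℂ)] Complex.GammaIntegral := by
    filter_upwards [(isOpen_lt continuous_const Complex.continuous_re).mem_nhds hs] with z hz
      using Complex.Gamma_eq_integral hz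
  have h := (Complex.hasDerivAt_GammaIntegral (s := s) hs).congr_of_eventuallyEq eventually_eq
  rw [complex_integral] at h
  simpa only [Complex.Gamma_ofReal, Complex.ofReal_re] using h.real_of_complex

theorem integral_log_mul_exp_neg_Ioi :
    ∫ t in Ioi 0, log t * exp (-t) = -eulerMascheroniConstant := by
  simpa using (hasDerivAt_Gamma_integral one_pos).unique hasDerivAt_Gamma_one

theorem integrableOn_log_mul_exp_neg_Ioi :
    IntegrableOn (fun t ↦ log t * exp (-t)) (Ioi 0) := by
  -- The integral of a non-integrable function is `0`, whereas this one is `-γ < 0`.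
  refine Integrable.of_integral_ne_zero ?_
  rw [integral_log_mul_exp_neg_Ioi]
  linarith [one_half_lt_eulerMascheroniConstant]

theorem tendsto_log_mul_exp_neg_atTop : Tendsto (fun t ↦ log t * exp (-t)) atTop (𝓝 0) := by
  have h := isLittleO_log_id_atTop.isBigO.mul (isBigO_refl (fun t : ℝ ↦ exp (-t)) atTop)
  exact h.trans_tendsto (by simpa using tendsto_pow_mul_exp_neg_atTop_nhds_zero 1)

theorem tendsto_log_mul_one_sub_exp_neg_nhdsGT_zero :
    Tendsto (fun x ↦ log x * (1 - exp (-x))) (𝓝[>] 0) (𝓝 0) := by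
  have one_sub_exp_neg : (fun x : ℝ ↦ 1 - exp (-x)) =O[𝓝[>] 0] fun x ↦ x := by
    simpa using (hasDerivAt_neg (0 : ℝ)).exp.isBigO_sub.neg_left.mono nhdsWithin_le_nhds
  exact ((isBigO_refl log _).mul one_sub_exp_neg).trans_tendsto
    (by simpa using tendsto_log_mul_rpow_nhdsGT_zero one_pos)

/-- The exponential integral `E₁(x) = ∫ₓ^∞ t⁻¹ e⁻ᵗ dt` of a real `x > 0`. For `x ≤ 0` the integral
diverges at `t = 0`, and the value is `0` rather than a principal value. -/
noncomputable def expIntegralE₁ (x : ℝ) : ℝ :=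
  ∫ t in Ioi x, t⁻¹ * exp (-t)

theorem integrableOn_inv_mul_exp_neg_mul_Ioi {a lam : ℝ} (ha : 0 < a) (hlam : 0 < lam) :
    IntegrableOn (fun t ↦ t⁻¹ * exp (-lam * t)) (Ioi a) := by
  refine ((exp_neg_integrableOn_Ioi a hlam).const_mul a⁻¹).mono'
    (measurable_inv.mul (by fun_prop)).aestronglyMeasurable ?_
  filter_upwards [ae_restrict_mem measurableSet_Ioi] with t ht
  have hat : a < t := ht
  have ht_pos : 0 < t := ha.trans hat
  rw [norm_of_nonneg (by positivity)]
  gcongr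

theorem integral_inv_mul_exp_neg_mul_Ioi (a : ℝ) {lam : ℝ} (hlam : 0 < lam) :
    ∫ t in Ioi a, t⁻¹ * exp (-lam * t) = expIntegralE₁ (a * lam) := by
  rw [expIntegralE₁, mul_comm a, ← integral_comp_mul_left_Ioi' _ a hlam, smul_eq_mul,
    ← integral_const_mul]
  congr 1 with t
  rw [mul_inv, ← mul_assoc, mul_inv_cancel_left₀ hlam.ne', neg_mul]

theorem expIntegralE₁_eq_integral_log_sub {x : ℝ} (hx : 0 < x) :
    expIntegralE₁ x = (∫ t in Ioi x, log t * exp (-t)) - log x * exp (-x) := by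
  have integrable_log := integrableOn_log_mul_exp_neg_Ioi.mono_set (Ioi_subset_Ioi hx.le)
  have integrable_inv : IntegrableOn (fun t ↦ t⁻¹ * exp (-t)) (Ioi x) := by
    simpa using integrableOn_inv_mul_exp_neg_mul_Ioi hx one_pos
  have tendsto_at_x :
      Tendsto (fun t ↦ log t * exp (-t)) (𝓝[>] x) (𝓝 (log x * exp (-x))) :=
    ((continuousAt_log hx.ne').mul (by fun_prop)).tendsto.mono_left nhdsWithin_le_nhds
  have by_parts := integral_Ioi_mul_deriv_eq_deriv_mul
    (fun t ht ↦ hasDerivAt_log (hx.trans ht).ne')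
    (fun t _ ↦ by simpa using (hasDerivAt_neg t).exp)
    (by simpa [Pi.mul_def] using integrable_log.neg)
    integrable_inv tendsto_at_x tendsto_log_mul_exp_neg_atTop
  simp only [mul_neg, integral_neg] at by_parts
  rw [expIntegralE₁]
  linarith

theorem tendsto_expIntegralE₁_add_log :
    Tendsto (fun x ↦ expIntegralE₁ x + log x) (𝓝[>] 0) (𝓝 (-eulerMascheroniConstant)) := by
  have tendsto_integral_log : Tendsto (fun x ↦ ∫ t in Ioi x, log t * exp (-t)) (𝓝[>] 0)
      (𝓝 (-eulerMascheroniConstant)) := by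
    rw [← integral_log_mul_exp_neg_Ioi]
    exact integrableOn_log_mul_exp_neg_Ioi.continuousWithinAt_Ici_primitive_Ioi.mono_left
      (nhdsWithin_mono 0 Ioi_subset_Ici_self)
  have h := tendsto_integral_log.add tendsto_log_mul_one_sub_exp_neg_nhdsGT_zero
  rw [add_zero] at h
  refine h.congr' ?_
  filter_upwards [self_mem_nhdsWithin] with x hx
  rw [expIntegralE₁_eq_integral_log_sub hx]
  ring

theorem tendsto_expIntegralE₁_mul_add_log {a : ℝ} (ha : 0 < a) :
    Tendsto (fun lam ↦ expIntegralE₁ (a * lam) + log lam) (𝓝[>] 0)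
      (𝓝 (-eulerMascheroniConstant - log a)) := by
  have tendsto_mul : Tendsto (a * ·) (𝓝[>] 0) (𝓝[>] 0) :=
    tendsto_iff_comap.2 (comap_mulLeft_nhdsGT_zero ha).ge
  refine ((tendsto_expIntegralE₁_add_log.comp tendsto_mul).sub_const (log a)).congr' ?_
  filter_upwards [self_mem_nhdsWithin] with lam hlam
  rw [Function.comp_apply, log_mul ha.ne' (ne_of_gt hlam)]
  ring

section

variable {E : Type*} [NormedAddCommGroup E] [NormedSpace ℝ E] {μ : Measure ℝ} {g : ℝ → E}

theorem norm_exp_neg_mul_smul_le {lam t : ℝ} (hlam : 0 ≤ lam) (ht : 0 ≤ t) (v : E) :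
    ‖exp (-lam * t) • v‖ ≤ ‖v‖ := by
  rw [norm_smul, norm_of_nonneg (exp_pos _).le]
  exact mul_le_of_le_one_left (norm_nonneg v) (exp_le_one_iff.2 (by simpa using mul_nonneg hlam ht))

theorem integrable_exp_neg_mul_smul {lam : ℝ} (hlam : 0 ≤ lam) (hμ : ∀ᵐ t ∂μ, 0 ≤ t)
    (hg : Integrable g μ) : Integrable (fun t ↦ exp (-lam * t) • g t) μ :=
  hg.mono (AEStronglyMeasurable.smul (by fun_prop) hg.1)
    (hμ.mono fun t ht ↦ norm_exp_neg_mul_smul_le hlam ht (g t))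

theorem tendsto_integral_exp_neg_mul_smul (hμ : ∀ᵐ t ∂μ, 0 ≤ t) (hg : Integrable g μ) :
    Tendsto (fun lam : ℝ ↦ ∫ t, exp (-lam * t) • g t ∂μ) (𝓝[≥] 0) (𝓝 (∫ t, g t ∂μ)) := by
  refine tendsto_integral_filter_of_dominated_convergence (‖g ·‖) ?_ ?_ hg.norm ?_
  · filter_upwards [self_mem_nhdsWithin] with lam hlam
      using (integrable_exp_neg_mul_smul hlam hμ hg).1
  · filter_upwards [self_mem_nhdsWithin] with lam hlam
      using hμ.mono fun t ht ↦ norm_exp_neg_mul_smul_le hlam ht (g t)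
  · refine .of_forall fun t ↦ ?_
    have h : Continuous fun lam : ℝ ↦ exp (-lam * t) • g t := by fun_prop
    simpa using (h.tendsto 0).mono_left nhdsWithin_le_nhds

theorem integrableOn_inv_smul_of_isBigO_rpow_neg {a ρ : ℝ} (ha : 0 < a) (hρ : 0 < ρ)
    (hg : LocallyIntegrableOn g (Ici a)) (hg_decay : g =O[atTop] (· ^ (-ρ))) :
    IntegrableOn (fun t ↦ t⁻¹ • g t) (Ici a) := by
  have continuous_inv : ContinuousOn (fun t : ℝ ↦ t⁻¹) (Ici a) :=
    continuousOn_inv₀.mono fun t ht ↦ (ha.trans_le ht).ne'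
  have decay : (fun t ↦ t⁻¹ • g t) =O[atTop] (· ^ (-1 - ρ)) := by
    refine ((isBigO_refl (fun t : ℝ ↦ t⁻¹) atTop).smul hg_decay).congr' .rfl ?_
    filter_upwards [eventually_gt_atTop 0] with t ht
    rw [smul_eq_mul, sub_eq_add_neg, rpow_add ht, rpow_neg_one]
  exact (hg.continuousOn_smul isClosed_Ici.isLocallyClosed continuous_inv)
    |>.integrableOn_of_isBigO_atTop decay (integrableAtFilter_rpow_atTop_iff.2 (by linarith))

theorem relative_zeta_large_time_limit_general [CompleteSpace E] {a : ℝ} (ha : 0 < a) (b₀ : E)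
    (f : ℝ → E) (hf : IntegrableOn (fun t ↦ t⁻¹ • (f t - b₀)) (Ioi a)) :
    Tendsto
      (fun lam : ℝ ↦ (∫ t in Ioi a, (t⁻¹ * exp (-lam * t)) • f t) + log lam • b₀)
      (𝓝[>] 0)
      (𝓝 ((∫ t in Ioi a, t⁻¹ • (f t - b₀)) - (eulerMascheroniConstant + log a) • b₀)) := by
  have nonneg : ∀ᵐ t ∂volume.restrict (Ioi a), 0 ≤ t :=
    (ae_restrict_mem measurableSet_Ioi).mono fun t ht ↦ (ha.trans ht).le
  have tendsto_remainder := (tendsto_integral_exp_neg_mul_smul nonneg hf).mono_left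
    (nhdsWithin_mono 0 Ioi_subset_Ici_self)
  have tendsto_constant := (tendsto_expIntegralE₁_mul_add_log ha).smul_const b₀
  have h := tendsto_remainder.add tendsto_constant
  rw [← neg_add', neg_smul, ← sub_eq_add_neg] at h
  refine h.congr' ?_
  filter_upwards [self_mem_nhdsWithin] with lam hlam
  rw [← integral_inv_mul_exp_neg_mul_Ioi a hlam, add_smul, ← integral_smul_const, ← add_assoc,
    ← integral_add (integrable_exp_neg_mul_smul (le_of_lt hlam) nonneg hf)
      ((integrableOn_inv_mul_exp_neg_mul_Ioi ha hlam).smul_const b₀)]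
  congr 3 with t
  module

end

/-- The core analytic content of Proposition 2.1 of the paper: if
`f : [1,∞) → ℝ` is locally integrable and `|f(t) − b₀| ≤ C t^{−ρ}` for `t ≥ 1`
(with `ρ > 0`, `C > 0`), then
`lim_{λ→0⁺} ( ∫₁^∞ t⁻¹ e^{−λt} f(t) dt + b₀ log λ )
  = ∫₁^∞ t⁻¹ (f(t) − b₀) dt − b₀ γ`,
where `γ` is the Euler–Mascheroni constant. -/
theorem relative_zeta_large_time_limit
    (b₀ ρ C : ℝ) (hρ : 0 < ρ) (hC : 0 < C) (f : ℝ → ℝ)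
    (hloc : LocallyIntegrableOn f (Set.Ici 1))
    (hbound : ∀ t : ℝ, 1 ≤ t → |f t - b₀| ≤ C * t ^ (-ρ)) :
    Tendsto
      (fun lam : ℝ =>
        (∫ t in Set.Ioi (1 : ℝ), t⁻¹ * Real.exp (-lam * t) * f t) + b₀ * Real.log lam)
      (nhdsWithin 0 (Set.Ioi 0))
      (nhds ((∫ t in Set.Ioi (1 : ℝ), t⁻¹ * (f t - b₀))
        - b₀ * Real.eulerMascheroniConstant)) := by
  have decay : (fun t ↦ f t - b₀) =O[atTop] (· ^ (-ρ)) := by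
    refine .of_bound C ?_
    filter_upwards [eventually_ge_atTop 1] with t ht
    rw [norm_eq_abs, norm_of_nonneg (by positivity)]
    exact hbound t ht
  have integrable_remainder := integrableOn_inv_smul_of_isBigO_rpow_neg one_pos hρ
    (hloc.sub (locallyIntegrableOn_const b₀)) decay
  simpa [mul_comm b₀] using relative_zeta_large_time_limit_general one_pos b₀ f
    (integrable_remainder.mono_set Ioi_subset_Ici_self)
end

section
/- For all x₀ > 0 and all real σ₀ ≤ σ₁ there exists a constant C > 0 such that for every s ∈ ℂ with σ₀ ≤ Re s ≤ σ₁ and every real x ≥ x₀, |∫₀^∞ e^{−x(t + 1/t)} t^{s−1} dt| ≤ C e^{−2x}. -/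
open MeasureTheory Real

/-!
Write `K_σ(x)` for the integral with real order `σ`. Since `|t ^ (s - 1)| = t ^ (Re s - 1)`, we have
`|K_s(x)| ≤ K_{Re s}(x)`, and `t ^ σ ≤ t ^ σ₀ + t ^ σ₁` for `σ ∈ [σ₀, σ₁]` reduces the strip to its
two boundary orders. As `t + 1 / t ≥ 2`, the function `e^{2x} K_σ(x)` is antitone on `x > 0`, so its
values on `[x₀, ∞)` are at most its value at `x₀`.
-/

open Asymptotics Filter Set Topology

lemma two_le_add_one_div {K : Type*} [Field K] [LinearOrder K] [IsStrictOrderedRing K] {t : K}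
    (ht : 0 < t) : 2 ≤ t + 1 / t := by
  have square_div : t + 1 / t - 2 = (t - 1) ^ 2 / t := by field_simp; ring
  have : 0 ≤ (t - 1) ^ 2 / t := by positivity
  linarith

lemma rpow_le_rpow_add_rpow {t a b c : ℝ} (ht : 0 < t) (hab : a ≤ b) (hbc : b ≤ c) :
    t ^ b ≤ t ^ a + t ^ c := by
  rcases le_total t 1 with ht1 | ht1
  · exact (rpow_le_rpow_of_exponent_ge ht ht1 hab).trans
      (le_add_of_nonneg_right (rpow_nonneg ht.le c))
  · exact (rpow_le_rpow_of_exponent_le ht1 hbc).trans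
      (le_add_of_nonneg_left (rpow_nonneg ht.le a))

/-- The Bessel-type integral `K_σ(x)` of real order `σ`, which dominates the integrals `K_s(x)` of
complex order with `Re s = σ`. It converges for `0 < x`. -/
noncomputable def besselK (σ x : ℝ) : ℝ :=
  ∫ t in Ioi 0, exp (-x * (t + 1 / t)) * t ^ (σ - 1)

lemma isBigO_exp_neg_mul_add_one_div_atTop {x : ℝ} (hx : 0 < x) (a : ℝ) :
    (fun t : ℝ => exp (-x * (t + 1 / t))) =O[atTop] (· ^ a) := by
  refine IsBigO.trans ?_ (isLittleO_exp_neg_mul_rpow_atTop hx a).isBigO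
  refine IsBigO.of_norm_eventuallyLE ?_
  filter_upwards [eventually_gt_atTop 0] with t ht
  rw [norm_of_nonneg (exp_pos _).le, exp_le_exp, neg_mul, neg_mul, neg_le_neg_iff]
  gcongr
  exact le_add_of_nonneg_right (by positivity)

-- The phase `t + 1 / t` is invariant under `t ↦ t⁻¹`, which exchanges `0` and `∞`.
lemma isBigO_exp_neg_mul_add_one_div_nhdsGT_zero {x : ℝ} (hx : 0 < x) (a : ℝ) :
    (fun t : ℝ => exp (-x * (t + 1 / t))) =O[𝓝[>] 0] (· ^ a) := by
  refine ((isBigO_exp_neg_mul_add_one_div_atTop hx (-a)).comp_tendsto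
    tendsto_inv_nhdsGT_zero).congr' (.of_forall fun t => ?_) ?_
  · simp only [Function.comp_apply, one_div, inv_inv, add_comm]
  · filter_upwards [self_mem_nhdsWithin] with t ht
    rw [Function.comp_apply, inv_rpow (le_of_lt ht), rpow_neg (le_of_lt ht), inv_inv]

lemma integrableOn_besselK (σ : ℝ) {x : ℝ} (hx : 0 < x) :
    IntegrableOn (fun t : ℝ => exp (-x * (t + 1 / t)) * t ^ (σ - 1)) (Ioi 0) := by
  have continuousOn_exp : ContinuousOn (fun t : ℝ => exp (-x * (t + 1 / t))) (Ioi 0) := by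
    fun_prop (disch := exact fun t ht => ne_of_gt ht)
  simpa only [mul_comm] using mellin_convergent_of_isBigO_scalar
    (continuousOn_exp.locallyIntegrableOn measurableSet_Ioi)
    (isBigO_exp_neg_mul_add_one_div_atTop hx _) (lt_add_one σ)
    (isBigO_exp_neg_mul_add_one_div_nhdsGT_zero hx _) (sub_one_lt σ)

lemma besselK_pos (σ : ℝ) {x : ℝ} (hx : 0 < x) : 0 < besselK σ x := by
  have integrand_pos : ∀ t ∈ Ioi (0 : ℝ), 0 < exp (-x * (t + 1 / t)) * t ^ (σ - 1) :=
    fun t ht => mul_pos (exp_pos _) (rpow_pos_of_pos ht _)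
  have support_inter : (Function.support fun t : ℝ => exp (-x * (t + 1 / t)) * t ^ (σ - 1)) ∩
      Ioi 0 = Ioi 0 := inter_eq_right.2 fun t ht => (integrand_pos t ht).ne'
  rw [besselK, setIntegral_pos_iff_support_of_nonneg_ae
    (ae_restrict_of_forall_mem measurableSet_Ioi fun t ht => (integrand_pos t ht).le)
    (integrableOn_besselK σ hx), support_inter, volume_Ioi]
  exact ENNReal.zero_lt_top

lemma norm_integral_le_besselK (s : ℂ) (x : ℝ) :
    ‖∫ t in Ioi (0 : ℝ), (exp (-x * (t + 1 / t)) : ℂ) * (t : ℂ) ^ (s - 1)‖ ≤ besselK s.re x := by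
  refine (norm_integral_le_integral_norm _).trans_eq
    (setIntegral_congr_fun measurableSet_Ioi fun t ht => ?_)
  rw [norm_mul, Complex.norm_of_nonneg (exp_pos _).le, Complex.norm_cpow_eq_rpow_re_of_pos ht,
    Complex.sub_re, Complex.one_re]

lemma besselK_le_add {σ₀ σ σ₁ x : ℝ} (hσ₀ : σ₀ ≤ σ) (hσ₁ : σ ≤ σ₁) (hx : 0 < x) :
    besselK σ x ≤ besselK σ₀ x + besselK σ₁ x := by
  simp only [besselK]
  rw [← integral_add (integrableOn_besselK σ₀ hx) (integrableOn_besselK σ₁ hx)]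
  refine setIntegral_mono_on (integrableOn_besselK σ hx)
    ((integrableOn_besselK σ₀ hx).add (integrableOn_besselK σ₁ hx)) measurableSet_Ioi
    fun t ht => ?_
  rw [← mul_add]
  gcongr
  exact rpow_le_rpow_add_rpow ht (sub_le_sub_right hσ₀ 1) (sub_le_sub_right hσ₁ 1)

lemma antitoneOn_exp_mul_besselK (σ : ℝ) :
    AntitoneOn (fun x => exp (2 * x) * besselK σ x) (Ioi 0) := by
  intro x hx y hy hxy
  simp only [besselK, ← integral_const_mul]
  refine setIntegral_mono_on ((integrableOn_besselK σ hy).const_mul _)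
    ((integrableOn_besselK σ hx).const_mul _) measurableSet_Ioi fun t ht => ?_
  rw [← mul_assoc, ← mul_assoc, ← exp_add, ← exp_add]
  have : 0 ≤ t ^ (σ - 1) := rpow_nonneg (le_of_lt ht) _
  gcongr ?_ * _
  rw [exp_le_exp]
  linarith [mul_le_mul_of_nonneg_left (two_le_add_one_div ht) (sub_nonneg.2 hxy)]

/-- Estimate (5.6) of the paper: for all `x₀ > 0` and reals `σ₀ ≤ σ₁` there exists
`C > 0` such that `|K_s(x)| = |∫₀^∞ e^{−x(t + 1/t)} t^{s−1} dt| ≤ C e^{−2x}`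
for every `s ∈ ℂ` with `σ₀ ≤ Re s ≤ σ₁` and every `x ≥ x₀`. -/
theorem besselK_uniform_bound (x₀ : ℝ) (hx₀ : 0 < x₀) (σ₀ σ₁ : ℝ) (hσ : σ₀ ≤ σ₁) :
    ∃ C > (0 : ℝ), ∀ s : ℂ, σ₀ ≤ s.re → s.re ≤ σ₁ → ∀ x : ℝ, x₀ ≤ x →
      ‖∫ t in Set.Ioi (0 : ℝ), (Real.exp (-x * (t + 1 / t)) : ℂ) * (t : ℂ) ^ (s - 1)‖ ≤
        C * Real.exp (-2 * x) := by
  refine ⟨exp (2 * x₀) * (besselK σ₀ x₀ + besselK σ₁ x₀),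
    mul_pos (exp_pos _) (add_pos (besselK_pos σ₀ hx₀) (besselK_pos σ₁ hx₀)),
    fun s hs₀ hs₁ x hx => ?_⟩
  calc _ ≤ besselK s.re x := norm_integral_le_besselK s x
    _ = exp (2 * x) * besselK s.re x * exp (-2 * x) := by
      rw [mul_right_comm, ← exp_add, neg_mul, add_neg_cancel, exp_zero, one_mul]
    _ ≤ exp (2 * x₀) * besselK s.re x₀ * exp (-2 * x) := by
      gcongr ?_ * _
      exact antitoneOn_exp_mul_besselK s.re hx₀ (hx₀.trans_le hx) hx
    _ ≤ exp (2 * x₀) * (besselK σ₀ x₀ + besselK σ₁ x₀) * exp (-2 * x) := by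
      gcongr
      exact besselK_le_add hs₀ hs₁ hx₀
end

section
/- The function F(s) = (Γ(s − 1/2)/(√π · Γ(s))) · 2 (2π)^{1−2s} ζ(2s − 1) extends holomorphically across s = 0 with F(0) = 0, and its derivative at s = 0 equals 2π/3. -/
open Real Complex Filter

/-!
Since `1/Γ` has a simple zero with derivative `1` at the origin, the quotient of any function `f`
regular at `0` by `Γ` is regular at `0`, vanishes there, and has derivative `f 0`. Hence
`ξ_Y'(0) = Γ(-1/2) ζ_Y(-1/2) / √π = -2 ζ_Y(-1/2)` as soon as `ζ_Y` is regular at `-1/2`. For the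
circle, `ζ_Y(-1/2) = 4π ζ(-1) = -π/3`.
-/

section Gamma

theorem analyticAt_inv_Gamma (s : ℂ) : AnalyticAt ℂ (fun z ↦ (Complex.Gamma z)⁻¹) s :=
  differentiable_one_div_Gamma.analyticAt s

theorem analyticAt_Gamma {s : ℂ} (hs : ∀ m : ℕ, s ≠ -m) : AnalyticAt ℂ Complex.Gamma s := by
  simpa only [Pi.inv_def, inv_inv] using
    (analyticAt_inv_Gamma s).inv (inv_ne_zero (Complex.Gamma_ne_zero hs))

theorem neg_one_half_ne_neg_natCast (m : ℕ) : (-1 / 2 : ℂ) ≠ -m := by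
  intro h
  have h_two_mul : (2 * m : ℂ) = 1 := by linear_combination 2 * h
  have : 2 * m = 1 := by exact_mod_cast h_two_mul
  lia

theorem Gamma_neg_one_half : Complex.Gamma (-1 / 2) = -2 * (√π : ℂ) := by
  have h_half : Complex.Gamma (1 / 2) = (√π : ℂ) := by
    rw [← Real.Gamma_one_half_eq, ← Complex.Gamma_ofReal]
    norm_num
  have h_rec := Complex.Gamma_add_one (-1 / 2) (by norm_num)
  rw [show (-1 / 2 + 1 : ℂ) = 1 / 2 by norm_num, h_half] at h_rec
  linear_combination 2 * h_rec

theorem analyticAt_div_Gamma {f : ℂ → ℂ} {s : ℂ} (hf : AnalyticAt ℂ f s) :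
    AnalyticAt ℂ (fun z ↦ f z / Complex.Gamma z) s := by
  simpa only [div_eq_mul_inv] using hf.fun_mul (analyticAt_inv_Gamma s)

/-- Mathlib's `Γ 0 = 0` and `x / 0 = 0` give the quotient its limiting value at `0`. -/
theorem hasDerivAt_div_Gamma_zero {f : ℂ → ℂ} (hf : ContinuousAt f 0) :
    HasDerivAt (fun s ↦ f s / Complex.Gamma s) (f 0) 0 := by
  have h_lim : Tendsto (fun s ↦ f s / (s * Complex.Gamma s)) (nhdsWithin 0 {0}ᶜ) (nhds (f 0)) := by
    simpa only [div_one, Pi.div_def] using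
      hf.continuousWithinAt.tendsto.div tendsto_self_mul_Gamma_nhds_zero one_ne_zero
  rw [hasDerivAt_iff_tendsto_slope_zero]
  refine h_lim.congr fun s ↦ ?_
  rw [zero_add, Complex.Gamma_zero, div_zero, sub_zero, smul_eq_mul]
  ring

end Gamma

section Xi

/-- The function `ξ_Y(s) = Γ(s - 1/2) ζ_Y(s - 1/2) / (√π Γ(s))` attached to the Laplace zeta
function `Z = ζ_Y` of a closed manifold `Y`. If `Z` is regular at `-1/2`, the convention
`x / 0 = 0` gives it at `s = 0` the value `0` of its holomorphic extension. -/
noncomputable def xi (Z : ℂ → ℂ) (s : ℂ) : ℂ :=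
  Complex.Gamma (s - 1 / 2) / ((√π : ℂ) * Complex.Gamma s) * Z (s - 1 / 2)

theorem ofReal_sqrt_pi_ne_zero : (√π : ℂ) ≠ 0 :=
  ofReal_ne_zero.mpr (sqrt_ne_zero'.mpr pi_pos)

theorem xi_zero (Z : ℂ → ℂ) : xi Z 0 = 0 := by
  simp only [xi, Complex.Gamma_zero, mul_zero, div_zero, zero_mul]

theorem xi_eq_div_Gamma (Z : ℂ → ℂ) :
    xi Z = fun s ↦ Complex.Gamma (s - 1 / 2) * Z (s - 1 / 2) / (√π : ℂ) / Complex.Gamma s := by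
  funext s
  rw [xi, div_mul_eq_mul_div, div_div]

variable {Z : ℂ → ℂ}

theorem analyticAt_xi_zero (hZ : AnalyticAt ℂ Z (-1 / 2)) : AnalyticAt ℂ (xi Z) 0 := by
  have h_half : (0 : ℂ) - 1 / 2 = -1 / 2 := by norm_num
  have h_num : AnalyticAt ℂ (fun s ↦ Complex.Gamma (s - 1 / 2) * Z (s - 1 / 2)) 0 :=
    ((analyticAt_Gamma neg_one_half_ne_neg_natCast).mul hZ).comp_of_eq
      (f := fun s : ℂ ↦ s - 1 / 2) (by fun_prop) h_half
  rw [xi_eq_div_Gamma]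
  exact analyticAt_div_Gamma (h_num.fun_div analyticAt_const ofReal_sqrt_pi_ne_zero)

theorem hasDerivAt_xi_zero (hZ : ContinuousAt Z (-1 / 2)) :
    HasDerivAt (xi Z) (-2 * Z (-1 / 2)) 0 := by
  have h_half : (0 : ℂ) - 1 / 2 = -1 / 2 := by norm_num
  have h_num : ContinuousAt (fun s ↦ Complex.Gamma (s - 1 / 2) * Z (s - 1 / 2)) 0 :=
    ((analyticAt_Gamma neg_one_half_ne_neg_natCast).continuousAt.mul hZ).comp_of_eq
      (f := fun s : ℂ ↦ s - 1 / 2) (by fun_prop) h_half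
  rw [xi_eq_div_Gamma]
  convert hasDerivAt_div_Gamma_zero (h_num.div_const (√π : ℂ)) using 1
  rw [h_half, Gamma_neg_one_half]
  field_simp [ofReal_sqrt_pi_ne_zero]

end Xi

section Circle

/-- The Laplace zeta function of the circle `ℝ/ℤ`: the nonzero eigenvalues are `(2πk)²` for
`k ≥ 1`, each of multiplicity two. -/
noncomputable def circleZeta (s : ℂ) : ℂ :=
  2 * ((2 * π : ℝ) : ℂ) ^ (-2 * s) * riemannZeta (2 * s)

theorem riemannZeta_neg_one : riemannZeta (-1) = -1 / 12 := by
  have h_bernoulli : riemannZeta (-1) = -(bernoulli' 2 : ℂ) / 2 := by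
    simpa [one_add_one_eq_two] using riemannZeta_neg_nat_eq_bernoulli' 1
  rw [h_bernoulli, bernoulli'_two]
  norm_num

theorem analyticAt_circleZeta {s : ℂ} (hs : s ≠ 1 / 2) : AnalyticAt ℂ circleZeta s := by
  have h_two_pi : ((2 * π : ℝ) : ℂ) ≠ 0 := ofReal_ne_zero.mpr two_pi_pos.ne'
  have h_pow : Differentiable ℂ fun z : ℂ ↦ ((2 * π : ℝ) : ℂ) ^ (-2 * z) := fun z ↦
    DifferentiableAt.const_cpow (by fun_prop) (.inl h_two_pi)
  have h_ne : 2 * s ≠ 1 := fun h ↦ hs (by linear_combination h / 2)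
  have h_zeta : AnalyticAt ℂ (fun z ↦ riemannZeta (2 * z)) s :=
    (analyticOn_riemannZeta (2 * s) h_ne).fun_comp (f := fun z ↦ 2 * z) (by fun_prop)
  exact (analyticAt_const.fun_mul (h_pow.analyticAt s)).fun_mul h_zeta

theorem circleZeta_neg_one_half : circleZeta (-1 / 2) = -(π / 3 : ℝ) := by
  rw [circleZeta, show (-2 : ℂ) * (-1 / 2) = 1 by norm_num, cpow_one,
    show (2 : ℂ) * (-1 / 2) = -1 by norm_num, riemannZeta_neg_one]
  push_cast
  ring

end Circle

/-- The function `F(s) = (Γ(s − 1/2)/(√π Γ(s))) · 2 (2π)^{1−2s} ζ(2s − 1)`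
(the function `ξ_Y` of the paper for the circle `Y = ℝ/ℤ`) extends
holomorphically across `s = 0`, with `F(0) = 0` and `F′(0) = 2π/3`. -/
theorem xi_circle_deriv_at_zero :
    ∃ F : ℂ → ℂ, AnalyticAt ℂ F 0 ∧
      (∀ᶠ s in nhdsWithin (0 : ℂ) {0}ᶜ,
        F s = Complex.Gamma (s - 1 / 2) / ((Real.sqrt π : ℂ) * Complex.Gamma s) *
          (2 * ((2 * π : ℝ) : ℂ) ^ (1 - 2 * s) * riemannZeta (2 * s - 1))) ∧
      F 0 = 0 ∧ HasDerivAt F ((2 * π / 3 : ℝ) : ℂ) 0 := by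
  have h_reg : AnalyticAt ℂ circleZeta (-1 / 2) := analyticAt_circleZeta (by norm_num)
  refine ⟨xi circleZeta, analyticAt_xi_zero h_reg, .of_forall fun s ↦ ?_, xi_zero _, ?_⟩
  · rw [xi, circleZeta, show -2 * (s - 1 / 2) = 1 - 2 * s by ring,
      show 2 * (s - 1 / 2) = 2 * s - 1 by ring]
  · convert hasDerivAt_xi_zero h_reg.continuousAt using 1
    rw [circleZeta_neg_one_half]
    push_cast
    ring
end
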